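/- Let ξ be an F_T-measurable random variable and assume that for every probability Q equivalent to P with E_Q[|ξ|] < ∞, the Q-martingale t ↦ E_Q[ξ | F_t] admits a modification M^Q with a.s. continuous paths. Then B^{2,0}(ξ) ≠ ∅ if and only if there exists a probability measure Q equivalent to P with E_Q[|ξ|] < ∞ such that, with β̂^Q_t = M^Q_t/(T−t) − ∫₀^t M^Q_u/(T−u)² du, one has E_Q[∫₀^T (β̂^Q_t)² dt] < ∞. -/

import Mathlib

open MeasureTheory Filter Set
open scoped ENNReal Topology

/-- `β ∈ B^{2,0}(ξ)` (under `μ`) : `β` is progressively measurable,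
`∫₀^T β_u² du < ∞` a.s., and `∫₀^T β_u du = ξ` almost surely. -/
def MemB20 {Ω : Type*} {mΩ : MeasurableSpace Ω} (μ : Measure Ω) (ℱ : Filtration ℝ mΩ)
    (T : ℝ) (ξ : Ω → ℝ) (β : ℝ → Ω → ℝ) : Prop :=
  ProgMeasurable ℱ β ∧
  (∀ᵐ ω ∂μ, (∫⁻ u in Set.Ioc (0:ℝ) T, ENNReal.ofReal ((β u ω)^2)) < ⊤) ∧
  ∀ᵐ ω ∂μ, ∫ u in Set.Ioc (0:ℝ) T, β u ω = ξ ω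

/-- `M` is a modification, with a.s. continuous paths on `[0,T]`, of the
`Q`-martingale `t ↦ E_Q[ξ | ℱ t]`. -/
def IsContModOfCondexpMart {Ω : Type*} {mΩ : MeasurableSpace Ω} (Q : Measure Ω)
    (ℱ : Filtration ℝ mΩ) (T : ℝ) (ξ : Ω → ℝ) (M : ℝ → Ω → ℝ) : Prop :=
  Adapted ℱ M ∧
  (∀ᵐ ω ∂Q, ContinuousOn (fun t => M t ω) (Set.Icc 0 T)) ∧
  ∀ t ∈ Set.Icc (0:ℝ) T, M t =ᵐ[Q] Q[ξ|ℱ t]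

theorem schur_test {α β : Type*} {mα : MeasurableSpace α} {mβ : MeasurableSpace β}
    {μ : Measure α} {ν : Measure β} [SFinite μ] [SFinite ν]
    {K : α → β → ℝ≥0∞} (hK : Measurable (Function.uncurry K))
    {h : α → ℝ≥0∞} {k : β → ℝ≥0∞} (hh : Measurable h) (hk : Measurable k)
    (hk0 : ∀ᵐ y ∂ν, k y ≠ 0) (hkt : ∀ᵐ y ∂ν, k y ≠ ∞) {C : ℝ≥0∞}
    (hKk : ∀ᵐ x ∂μ, ∫⁻ y, K x y * k y ∂ν ≤ C * h x)
    (hKh : ∀ᵐ y ∂ν, ∫⁻ x, K x y * h x ∂μ ≤ C * k y)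
    {f : β → ℝ≥0∞} (hf : AEMeasurable f ν) :
    ∫⁻ x, (∫⁻ y, K x y * f y ∂ν) ^ 2 ∂μ ≤ C ^ 2 * ∫⁻ y, f y ^ 2 ∂ν := by
  wlog hfm : Measurable f generalizing f
  · have e : ∀ x, ∫⁻ y, K x y * f y ∂ν = ∫⁻ y, K x y * hf.mk f y ∂ν := fun x =>
      lintegral_congr_ae (hf.ae_eq_mk.mono fun y hy => by simp only [hy])
    have e' : ∫⁻ y, f y ^ 2 ∂ν = ∫⁻ y, hf.mk f y ^ 2 ∂ν :=
      lintegral_congr_ae (hf.ae_eq_mk.mono fun y hy => by simp only [hy])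
    simp only [e, e']
    exact this hf.measurable_mk.aemeasurable hf.measurable_mk
  have hg : Measurable fun y => f y ^ 2 * (k y)⁻¹ := (hfm.pow_const 2).mul hk.inv
  have hKx : ∀ x, Measurable (K x) := fun x => hK.comp measurable_prodMk_left
  have hKy : ∀ y, Measurable fun x => K x y := fun y => hK.comp measurable_prodMk_right
  have cauchy : ∀ x, (∫⁻ y, K x y * f y ∂ν) ^ 2
      ≤ (∫⁻ y, K x y * k y ∂ν) * ∫⁻ y, K x y * (f y ^ 2 * (k y)⁻¹) ∂ν := by
    intro x
    have key := ENNReal.lintegral_mul_le_Lp_mul_Lq ν Real.HolderConjugate.two_two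
      (f := fun y => (K x y * k y) ^ (1 / 2 : ℝ))
      (g := fun y => (K x y * (f y ^ 2 * (k y)⁻¹)) ^ (1 / 2 : ℝ))
      (((hKx x).mul hk).pow_const _).aemeasurable
      (by have := hKx x; fun_prop)
    have e : ∀ a : ℝ≥0∞, (a ^ (1 / 2 : ℝ)) ^ (2 : ℝ) = a := fun a => by
      rw [← ENNReal.rpow_mul]; norm_num
    have e' : ∀ a : ℝ≥0∞, (a ^ (1 / 2 : ℝ)) ^ 2 = a := fun a => by
      rw [← ENNReal.rpow_two, e]
    have e2 : ∀ a : ℝ≥0∞, (a ^ 2) ^ (1 / 2 : ℝ) = a := fun a => by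
      rw [← ENNReal.rpow_two, ← ENNReal.rpow_mul]; norm_num
    simp only [e, Pi.mul_apply] at key
    have lhs : ∫⁻ y, K x y * f y ∂ν = ∫⁻ y, (K x y * k y) ^ (1 / 2 : ℝ) *
        (K x y * (f y ^ 2 * (k y)⁻¹)) ^ (1 / 2 : ℝ) ∂ν := by
      refine lintegral_congr_ae ?_
      filter_upwards [hk0, hkt] with y h0 ht
      rw [← ENNReal.mul_rpow_of_nonneg _ _ (by norm_num : (0:ℝ) ≤ 1 / 2)]
      rw [show K x y * k y * (K x y * (f y ^ 2 * (k y)⁻¹))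
        = (K x y * f y) ^ 2 * (k y * (k y)⁻¹) by ring, ENNReal.mul_inv_cancel h0 ht, mul_one, e2]
    rw [lhs]
    calc _ ≤ _ := pow_le_pow_left' key 2
      _ = _ := by rw [mul_pow, e', e']
  calc ∫⁻ x, (∫⁻ y, K x y * f y ∂ν) ^ 2 ∂μ
      ≤ ∫⁻ x, ∫⁻ y, C * h x * (K x y * (f y ^ 2 * (k y)⁻¹)) ∂ν ∂μ := by
        refine lintegral_mono_ae (hKk.mono fun x hx => (cauchy x).trans ?_)
        refine le_trans ?_ (lintegral_const_mul _ ((hKx x).mul hg)).ge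
        simp only [Pi.mul_apply]
        gcongr
    _ = ∫⁻ y, ∫⁻ x, C * h x * (K x y * (f y ^ 2 * (k y)⁻¹)) ∂μ ∂ν := by
        refine lintegral_lintegral_swap (Measurable.aemeasurable ?_)
        have : Measurable fun p : α × β => K p.1 p.2 := hK
        exact ((hh.comp measurable_fst).const_mul C).mul (this.mul
          (((hfm.comp measurable_snd).pow_const 2).mul (hk.comp measurable_snd).inv))
    _ ≤ ∫⁻ y, C ^ 2 * f y ^ 2 ∂ν := by
        refine lintegral_mono_ae ?_
        filter_upwards [hk0, hkt, hKh] with y h0 ht hy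
        calc ∫⁻ x, C * h x * (K x y * (f y ^ 2 * (k y)⁻¹)) ∂μ
            = ∫⁻ x, (C * (f y ^ 2 * (k y)⁻¹)) * (K x y * h x) ∂μ :=
              lintegral_congr fun x => by ring
          _ = (C * (f y ^ 2 * (k y)⁻¹)) * ∫⁻ x, K x y * h x ∂μ :=
              lintegral_const_mul _ ((hKy y).mul hh)
          _ ≤ (C * (f y ^ 2 * (k y)⁻¹)) * (C * k y) := by gcongr
          _ = C ^ 2 * f y ^ 2 * (k y * (k y)⁻¹) := by ring
          _ = C ^ 2 * f y ^ 2 := by rw [ENNReal.mul_inv_cancel h0 ht, mul_one]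
    _ = _ := lintegral_const_mul _ (hfm.pow_const 2)

theorem lintegral_Ioo_rpow_neg_half {t T : ℝ} (h : t < T) :
    ∫⁻ u in Ioo t T, ENNReal.ofReal ((T - u) ^ (-1 / 2 : ℝ))
      = ENNReal.ofReal (2 * (T - t) ^ (1 / 2 : ℝ)) := by
  have hi : IntervalIntegrable (fun u => (T - u) ^ (-1 / 2 : ℝ)) volume t T := by
    have := (intervalIntegral.intervalIntegrable_rpow' (a := T - t) (b := 0)
      (r := -1 / 2) (by norm_num)).comp_sub_left T
    simpa using this
  rw [restrict_Ioo_eq_restrict_Ioc,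
    ← ofReal_integral_eq_lintegral_ofReal ((intervalIntegrable_iff_integrableOn_Ioc_of_le h.le).1 hi),
    ← intervalIntegral.integral_of_le h.le,
    intervalIntegral.integral_comp_sub_left (fun x : ℝ => x ^ (-1 / 2 : ℝ)) T, sub_self,
    integral_rpow (by norm_num)]
  · congr 1
    norm_num
    ring
  · filter_upwards [ae_restrict_mem measurableSet_Ioc] with u hu
    exact Real.rpow_nonneg (sub_nonneg.2 hu.2) _

theorem lintegral_Ioc_rpow_neg_three_half_le {u T : ℝ} (h0 : 0 < u) (h : u < T) :
    ∫⁻ t in Ioc 0 u, ENNReal.ofReal ((T - t) ^ (-3 / 2 : ℝ))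
      ≤ ENNReal.ofReal (2 * (T - u) ^ (-1 / 2 : ℝ)) := by
  have h00 : (0:ℝ) ∉ uIcc (T - u) T := by
    rw [uIcc_of_le (by linarith)]; intro hx; linarith [hx.1]
  have hi : IntervalIntegrable (fun u => (T - u) ^ (-3 / 2 : ℝ)) volume 0 u := by
    have := (intervalIntegral.intervalIntegrable_rpow (μ := volume) (a := T) (b := T - u)
      (r := -3 / 2) (Or.inr (by rwa [uIcc_comm]))).comp_sub_left T
    simpa using this
  rw [← ofReal_integral_eq_lintegral_ofReal ((intervalIntegrable_iff_integrableOn_Ioc_of_le h0.le).1 hi),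
    ← intervalIntegral.integral_of_le h0.le,
    intervalIntegral.integral_comp_sub_left (fun x : ℝ => x ^ (-3 / 2 : ℝ)) T, sub_zero,
    integral_rpow (Or.inr ⟨by norm_num, h00⟩)]
  · refine ENNReal.ofReal_le_ofReal ?_
    have : 0 ≤ T ^ (-1 / 2 : ℝ) := Real.rpow_nonneg (by linarith) _
    norm_num at this ⊢
    linarith
  · filter_upwards [ae_restrict_mem measurableSet_Ioc] with v hv
    exact Real.rpow_nonneg (by linarith [hv.2]) _

theorem rpow_weight_mul {x : ℝ} (hx : 0 < x) :
    ENNReal.ofReal x⁻¹ * ENNReal.ofReal (2 * x ^ (1 / 2 : ℝ))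
      = 2 * ENNReal.ofReal (x ^ (-1 / 2 : ℝ)) := by
  rw [← ENNReal.ofReal_mul (by positivity), ← ENNReal.ofReal_ofNat, ← ENNReal.ofReal_mul (by norm_num)]
  congr 1
  rw [show (-1 / 2 : ℝ) = -1 + 1 / 2 by norm_num, Real.rpow_add hx, Real.rpow_neg_one]
  ring

theorem inv_mul_rpow_weight {x : ℝ} (hx : 0 < x) :
    ENNReal.ofReal x⁻¹ * ENNReal.ofReal (x ^ (-1 / 2 : ℝ))
      = ENNReal.ofReal (x ^ (-3 / 2 : ℝ)) := by
  rw [← ENNReal.ofReal_mul (by positivity)]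
  congr 1
  rw [show (-3 / 2 : ℝ) = -1 + -1 / 2 by norm_num, Real.rpow_add hx, Real.rpow_neg_one]

/-- The kernel of the Hardy operator on `(0, T)` based at the right endpoint. -/
noncomputable def hardyKernel (T t u : ℝ) : ℝ≥0∞ :=
  if t < u then ENNReal.ofReal (T - t)⁻¹ else 0

theorem measurable_hardyKernel (T : ℝ) : Measurable (Function.uncurry (hardyKernel T)) :=
  Measurable.ite (measurableSet_lt measurable_fst measurable_snd) (by fun_prop) measurable_const

theorem lintegral_hardyKernel_mul {T t : ℝ} (ht : t ∈ Ioo 0 T) (f : ℝ → ℝ≥0∞)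
    (hf : AEMeasurable f (volume.restrict (Ioo 0 T))) :
    ∫⁻ u in Ioo 0 T, hardyKernel T t u * f u
      = ENNReal.ofReal (T - t)⁻¹ * ∫⁻ u in Ioo t T, f u := by
  have e : ∀ u, hardyKernel T t u * f u
      = (Ioi t).indicator (fun u => ENNReal.ofReal (T - t)⁻¹ * f u) u := fun u => by
    by_cases h : t < u <;> simp [hardyKernel, h]
  simp only [e]
  rw [lintegral_indicator measurableSet_Ioi, Measure.restrict_restrict measurableSet_Ioi,
    show Ioi t ∩ Ioo 0 T = Ioo t T by
      ext u; simp only [mem_inter_iff, mem_Ioi, mem_Ioo]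
      exact ⟨fun h => ⟨h.1, h.2.2⟩, fun h => ⟨h.1, ht.1.trans h.1, h.2⟩⟩]
  exact lintegral_const_mul'' _ (hf.mono_measure
    (Measure.restrict_mono (Ioo_subset_Ioo_left ht.1.le) le_rfl))

theorem lintegral_hardyKernel_mul_left {T u : ℝ} (hu : u ∈ Ioo 0 T) (f : ℝ → ℝ≥0∞) :
    ∫⁻ t in Ioo 0 T, hardyKernel T t u * f t
      = ∫⁻ t in Ioc 0 u, ENNReal.ofReal (T - t)⁻¹ * f t := by
  have e : ∀ t, hardyKernel T t u * f t
      = (Iio u).indicator (fun t => ENNReal.ofReal (T - t)⁻¹ * f t) t := fun t => by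
    by_cases h : t < u <;> simp [hardyKernel, h]
  simp only [e]
  rw [lintegral_indicator measurableSet_Iio, Measure.restrict_restrict measurableSet_Iio,
    show Iio u ∩ Ioo 0 T = Ioo 0 u by
      ext t; simp only [mem_inter_iff, mem_Iio, mem_Ioo]
      exact ⟨fun h => ⟨h.2.1, h.1⟩, fun h => ⟨h.2, h.1, h.2.trans hu.2⟩⟩,
    restrict_Ioo_eq_restrict_Ioc]

theorem hardyKernel_mul_weight {T t : ℝ} (ht : t ∈ Ioo 0 T) :
    ∫⁻ u in Ioo 0 T, hardyKernel T t u * ENNReal.ofReal ((T - u) ^ (-1 / 2 : ℝ))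
      ≤ 2 * ENNReal.ofReal ((T - t) ^ (-1 / 2 : ℝ)) := by
  rw [lintegral_hardyKernel_mul ht _ (by fun_prop), lintegral_Ioo_rpow_neg_half ht.2,
    rpow_weight_mul (sub_pos.2 ht.2)]

theorem hardyKernel_mul_weight_left {T u : ℝ} (hu : u ∈ Ioo 0 T) :
    ∫⁻ t in Ioo 0 T, hardyKernel T t u * ENNReal.ofReal ((T - t) ^ (-1 / 2 : ℝ))
      ≤ 2 * ENNReal.ofReal ((T - u) ^ (-1 / 2 : ℝ)) := by
  rw [lintegral_hardyKernel_mul_left hu]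
  refine le_trans (le_of_eq ?_) ((lintegral_Ioc_rpow_neg_three_half_le hu.1 hu.2).trans_eq ?_)
  · exact setLIntegral_congr_fun measurableSet_Ioc fun t ht =>
      inv_mul_rpow_weight (sub_pos.2 (ht.2.trans_lt hu.2))
  · rw [ENNReal.ofReal_mul (by norm_num), ENNReal.ofReal_ofNat]

theorem ae_weight_ne_zero (T : ℝ) :
    ∀ᵐ u ∂(volume.restrict (Ioo 0 T)), ENNReal.ofReal ((T - u) ^ (-1 / 2 : ℝ)) ≠ 0 := by
  filter_upwards [ae_restrict_mem measurableSet_Ioo] with u hu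
  exact (ENNReal.ofReal_pos.2 (Real.rpow_pos_of_pos (sub_pos.2 hu.2) _)).ne'

/-- Hardy's inequality for the averages over `(t, T)`. -/
theorem hardy_inequality {T : ℝ} {f : ℝ → ℝ≥0∞}
    (hf : AEMeasurable f (volume.restrict (Ioo 0 T))) :
    ∫⁻ t in Ioo 0 T, (ENNReal.ofReal (T - t)⁻¹ * ∫⁻ u in Ioo t T, f u) ^ 2
      ≤ 2 ^ 2 * ∫⁻ u in Ioo 0 T, f u ^ 2 := by
  rw [← setLIntegral_congr_fun measurableSet_Ioo
    (fun t ht => congrArg (· ^ 2) (lintegral_hardyKernel_mul ht f hf))]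
  exact schur_test (measurable_hardyKernel T)
    (h := fun t => ENNReal.ofReal ((T - t) ^ (-1 / 2 : ℝ)))
    (k := fun t => ENNReal.ofReal ((T - t) ^ (-1 / 2 : ℝ))) (by fun_prop) (by fun_prop)
    (ae_weight_ne_zero T) (by simp)
    ((ae_restrict_mem measurableSet_Ioo).mono fun t ht => hardyKernel_mul_weight ht)
    ((ae_restrict_mem measurableSet_Ioo).mono fun t ht => hardyKernel_mul_weight_left ht) hf

/-- The dual Hardy inequality. -/
theorem dual_hardy_inequality {T : ℝ} {f : ℝ → ℝ≥0∞}
    (hf : AEMeasurable f (volume.restrict (Ioo 0 T))) :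
    ∫⁻ u in Ioo 0 T, (∫⁻ t in Ioc 0 u, ENNReal.ofReal (T - t)⁻¹ * f t) ^ 2
      ≤ 2 ^ 2 * ∫⁻ u in Ioo 0 T, f u ^ 2 := by
  rw [← setLIntegral_congr_fun measurableSet_Ioo
    (fun t ht => congrArg (· ^ 2) (lintegral_hardyKernel_mul_left ht f))]
  exact schur_test (K := fun u t => hardyKernel T t u)
    ((measurable_hardyKernel T).comp measurable_swap)
    (h := fun t => ENNReal.ofReal ((T - t) ^ (-1 / 2 : ℝ)))
    (k := fun t => ENNReal.ofReal ((T - t) ^ (-1 / 2 : ℝ))) (by fun_prop) (by fun_prop)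
    (ae_weight_ne_zero T) (by simp)
    ((ae_restrict_mem measurableSet_Ioo).mono fun t ht => hardyKernel_mul_weight_left ht)
    ((ae_restrict_mem measurableSet_Ioo).mono fun t ht => hardyKernel_mul_weight ht) hf

/-- The upper limit of `M` along the left-point discretizations of time with mesh `1 / (n + 1)`. -/
noncomputable def gridLimsup {Ω : Type*} (M : ℝ → Ω → ℝ) (t : ℝ) (ω : Ω) : ℝ :=
  limsup (fun n : ℕ => M (⌊((n : ℝ) + 1) * t⌋ / ((n : ℝ) + 1)) ω) atTop

theorem measurable_gridLimsup_min {Ω : Type*} [MeasurableSpace Ω] {M : ℝ → Ω → ℝ} {i : ℝ}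
    (hM : ∀ t ≤ i, Measurable (M t)) :
    Measurable fun p : ℝ × Ω => gridLimsup M (min p.1 i) p.2 := by
  refine Measurable.limsup fun n => ?_
  have hn : (0 : ℝ) < (n : ℝ) + 1 := by positivity
  have hG : Measurable fun p : ℤ × Ω => M (min (p.1 / ((n : ℝ) + 1)) i) p.2 :=
    measurable_from_prod_countable_right fun k =>
      hM (min (k / ((n : ℝ) + 1)) i) (min_le_right _ _)
  have hfloor : Measurable fun p : ℝ × Ω => (⌊((n : ℝ) + 1) * min p.1 i⌋, p.2) :=
    (Int.measurable_floor.comp (by fun_prop)).prodMk measurable_snd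
  convert hG.comp hfloor using 2 with p
  refine congrArg (M · p.2) (min_eq_left (le_trans ?_ (min_le_right p.1 i))).symm
  rw [div_le_iff₀' hn]
  exact Int.floor_le _

theorem gridLimsup_eq {Ω : Type*} {M : ℝ → Ω → ℝ} {T t : ℝ} {ω : Ω}
    (hM : ContinuousOn (fun t => M t ω) (Icc 0 T)) (ht : t ∈ Icc 0 T) :
    gridLimsup M t ω = M t ω := by
  refine Tendsto.limsup_eq ((hM t ht).tendsto.comp ?_)
  refine tendsto_nhdsWithin_iff.2 ⟨?_, Eventually.of_forall fun n => ?_⟩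
  · have h := (tendsto_nat_floor_mul_div_atTop ht.1).comp
      (tendsto_natCast_atTop_atTop (R := ℝ) |>.comp (tendsto_add_atTop_nat 1))
    refine h.congr fun n => ?_
    have : (0 : ℝ) ≤ ((n : ℝ) + 1) * t := mul_nonneg (by positivity) ht.1
    simp only [Function.comp, Nat.cast_add, Nat.cast_one]
    rw [mul_comm t, natCast_floor_eq_intCast_floor this]
  · have hn : (0 : ℝ) < (n : ℝ) + 1 := by positivity
    constructor
    · have : 0 ≤ ⌊((n : ℝ) + 1) * t⌋ := Int.floor_nonneg.2 (mul_nonneg hn.le ht.1)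
      have : (0 : ℝ) ≤ ⌊((n : ℝ) + 1) * t⌋ := by exact_mod_cast this
      positivity
    · refine le_trans ?_ ht.2
      rw [div_le_iff₀' hn]
      exact Int.floor_le _

/-- The drift `β̂` associated with a process `N`. -/
noncomputable def bridgeDrift {Ω : Type*} (T : ℝ) (N : ℝ → Ω → ℝ) (t : ℝ) (ω : Ω) : ℝ :=
  N t ω / (T - t) - ∫ u in Ioc (0 : ℝ) t, N u ω / (T - u) ^ 2

theorem measurable_setIntegral_Ioc_min {Ω : Type*} [MeasurableSpace Ω] {N : ℝ → Ω → ℝ} {i : ℝ}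
    (hN : Measurable fun p : ℝ × Ω => N (min p.1 i) p.2) :
    Measurable fun p : ℝ × Ω => ∫ u in Ioc (0 : ℝ) (min p.1 i), N u p.2 := by
  have hS : MeasurableSet {q : (ℝ × Ω) × ℝ | q.2 ∈ Ioc (0 : ℝ) (min q.1.1 i)} :=
    (measurableSet_lt measurable_const measurable_snd).inter
      (measurableSet_le measurable_snd (by fun_prop))
  have h : Measurable fun q : (ℝ × Ω) × ℝ =>
      {q : (ℝ × Ω) × ℝ | q.2 ∈ Ioc (0 : ℝ) (min q.1.1 i)}.indicator
        (fun q => N (min q.2 i) q.1.2) q :=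
    (hN.comp (by fun_prop : Measurable fun q : (ℝ × Ω) × ℝ => (q.2, q.1.2))).indicator hS
  have := (h.stronglyMeasurable.integral_prod_right' (ν := volume)).measurable
  convert this using 2 with p
  rw [← integral_indicator measurableSet_Ioc]
  refine integral_congr_ae (Eventually.of_forall fun u => ?_)
  by_cases hu : u ∈ Ioc (0 : ℝ) (min p.1 i)
  · have hui : u ≤ i := hu.2.trans (min_le_right _ _)
    simp only [indicator, mem_ofPred_eq, if_pos hu, min_eq_left hui]
  · simp only [indicator, mem_ofPred_eq, if_neg hu]

theorem measurable_bridgeDrift_min {Ω : Type*} [MeasurableSpace Ω] {N : ℝ → Ω → ℝ} {i : ℝ} (T : ℝ)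
    (hN : Measurable fun p : ℝ × Ω => N (min p.1 i) p.2) :
    Measurable fun p : ℝ × Ω => bridgeDrift T N (min p.1 i) p.2 :=
  (hN.div (by fun_prop)).sub (measurable_setIntegral_Ioc_min
    (N := fun u ω => N u ω / (T - u) ^ 2) (hN.div (by fun_prop)))

theorem bridgeDrift_congr {Ω : Type*} {T t : ℝ} {ω : Ω} {M N : ℝ → Ω → ℝ}
    (h : ∀ u ∈ Icc 0 T, M u ω = N u ω) (ht : t ∈ Icc 0 T) :
    bridgeDrift T M t ω = bridgeDrift T N t ω := by
  unfold bridgeDrift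
  rw [h t ht, setIntegral_congr_fun measurableSet_Ioc fun u hu => by
    rw [h u ⟨hu.1.le, hu.2.trans ht.2⟩]]

theorem isStronglyProgressive_iff_measurable_min {Ω : Type*} {mΩ : MeasurableSpace Ω}
    {ℱ : Filtration ℝ mΩ} {u : ℝ → Ω → ℝ} :
    IsStronglyProgressive ℱ u ↔
      ∀ i, @Measurable _ _ (@Prod.instMeasurableSpace _ _ _ (ℱ i)) _
        fun p : ℝ × Ω => u (min p.1 i) p.2 := by
  refine forall_congr' fun i => ?_
  let _ : MeasurableSpace Ω := ℱ i
  constructor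
  · intro h
    exact h.measurable.comp (((by fun_prop : Measurable fun p : ℝ × Ω => min p.1 i).subtype_mk
      (h := fun p => mem_Iic.2 (min_le_right p.1 i))).prodMk measurable_snd)
  · intro h
    refine Measurable.stronglyMeasurable ?_
    have e : (fun p : Iic i × Ω => u p.1 p.2) =
        (fun p : ℝ × Ω => u (min p.1 i) p.2) ∘ fun p : Iic i × Ω => ((p.1 : ℝ), p.2) := by
      funext p
      simp [min_eq_left (show (p.1 : ℝ) ≤ i from p.1.2)]
    rw [e]
    exact h.comp (by fun_prop)

/-- The drift of a path `m` : the deterministic counterpart of `bridgeDrift`. -/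
noncomputable def pathDrift (T : ℝ) (m : ℝ → ℝ) (t : ℝ) : ℝ :=
  m t / (T - t) - ∫ u in Ioc (0 : ℝ) t, m u / (T - u) ^ 2

theorem continuousOn_div_sub_sq {T t : ℝ} (ht : t < T) {m : ℝ → ℝ}
    (hm : ContinuousOn m (Icc 0 t)) : ContinuousOn (fun u => m u / (T - u) ^ 2) (Icc 0 t) :=
  hm.div (by fun_prop) fun u hu => pow_ne_zero _ (sub_pos.2 (hu.2.trans_lt ht)).ne'

theorem continuousOn_pathDrift {T : ℝ} {m : ℝ → ℝ} (hm : ContinuousOn m (Icc 0 T)) :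
    ContinuousOn (pathDrift T m) (Ico 0 T) := by
  refine (((hm.mono Ico_subset_Icc_self)).div (by fun_prop)
    fun u hu => (sub_pos.2 hu.2).ne').sub ?_
  intro t ht
  obtain ⟨s, hts, hsT⟩ := exists_between ht.2
  have hs0 : 0 ≤ s := ht.1.trans hts.le
  have hc := continuousOn_div_sub_sq hsT (hm.mono (Icc_subset_Icc_right hsT.le))
  have := (intervalIntegral.continuousOn_primitive (μ := volume) hc.integrableOn_Icc) t ⟨ht.1, hts.le⟩
  refine this.mono_of_mem_nhdsWithin ?_
  filter_upwards [self_mem_nhdsWithin, mem_nhdsWithin_of_mem_nhds (Iio_mem_nhds hts)] with x hx hx'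
  exact ⟨hx.1, le_of_lt hx'⟩

theorem integral_pathDrift {T t : ℝ} {m : ℝ → ℝ} (hm : ContinuousOn m (Icc 0 T))
    (ht0 : 0 ≤ t) (ht : t < T) :
    ∫ u in 0..t, pathDrift T m u = (T - t) * ∫ u in Ioc (0 : ℝ) t, m u / (T - u) ^ 2 := by
  have hc := continuousOn_div_sub_sq ht (hm.mono (Icc_subset_Icc_right ht.le))
  have hb : ContinuousOn (pathDrift T m) (Icc 0 t) :=
    (continuousOn_pathDrift hm).mono fun u hu => ⟨hu.1, hu.2.trans_lt ht⟩
  have hprim : ContinuousOn (fun s => ∫ u in Ioc (0 : ℝ) s, m u / (T - u) ^ 2) (Icc 0 t) :=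
    intervalIntegral.continuousOn_primitive (μ := volume) hc.integrableOn_Icc
  have key := intervalIntegral.integral_eq_sub_of_hasDerivAt_of_le
    (f := fun s => (T - s) * ∫ u in Ioc (0 : ℝ) s, m u / (T - u) ^ 2) (f' := pathDrift T m) ht0
    ((by fun_prop : ContinuousOn (fun s => T - s) (Icc 0 t)).mul hprim) ?_
    (hb.intervalIntegrable_of_Icc ht0)
  · rw [key]; simp
  · intro s hs
    have hsT : s < T := hs.2.trans ht
    have hca : ContinuousAt (fun u => m u / (T - u) ^ 2) s := hc.continuousAt (Icc_mem_nhds hs.1 hs.2)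
    have hd : HasDerivAt (fun s => ∫ u in (0 : ℝ)..s, m u / (T - u) ^ 2) (m s / (T - s) ^ 2) s := by
      refine intervalIntegral.integral_hasDerivAt_right
        ((hc.mono (Icc_subset_Icc_right hs.2.le)).intervalIntegrable_of_Icc hs.1.le) ?_ hca
      exact ContinuousOn.stronglyMeasurableAtFilter isOpen_Ioo (hc.mono Ioo_subset_Icc_self) s hs
    have hd' : HasDerivAt (fun s => ∫ u in Ioc (0 : ℝ) s, m u / (T - u) ^ 2) (m s / (T - s) ^ 2) s :=
      hd.congr_of_eventuallyEq ((lt_mem_nhds hs.1).mono fun x hx =>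
        (intervalIntegral.integral_of_le (le_of_lt hx)).symm)
    refine (((hasDerivAt_id s).const_sub T).mul hd').congr_deriv ?_
    have : T - s ≠ 0 := (sub_pos.2 hsT).ne'
    simp only [pathDrift, id]
    field_simp
    ring

theorem integral_pathDrift_eq {T : ℝ} (hT : 0 < T) {m : ℝ → ℝ} (hm : ContinuousOn m (Icc 0 T))
    (hb : ∫⁻ u in Ioc (0 : ℝ) T, ENNReal.ofReal (pathDrift T m u ^ 2) < ⊤) :
    ∫ u in Ioc (0 : ℝ) T, pathDrift T m u = m T := by
  have hmeas : AEStronglyMeasurable (pathDrift T m) (volume.restrict (Ioc 0 T)) := by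
    rw [← restrict_Ioo_eq_restrict_Ioc]
    exact ((continuousOn_pathDrift hm).mono Ioo_subset_Ico_self).aestronglyMeasurable
      measurableSet_Ioo
  have hint : IntegrableOn (pathDrift T m) (Ioc 0 T) := by
    have h2 : MemLp (pathDrift T m) 2 (volume.restrict (Ioc 0 T)) := by
      refine (memLp_two_iff_integrable_sq hmeas).2 ⟨hmeas.pow 2, ?_⟩
      rw [hasFiniteIntegral_iff_ofReal (Eventually.of_forall fun u => sq_nonneg _)]
      exact hb
    exact h2.integrable one_le_two
  have hII : IntervalIntegrable (pathDrift T m) volume 0 T :=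
    (intervalIntegrable_iff_integrableOn_Ioc_of_le hT.le).2 hint
  rw [← intervalIntegral.integral_of_le hT.le]
  set L := ∫ u in 0..T, pathDrift T m u with hL
  have hlim : Tendsto (fun t => ∫ u in 0..t, pathDrift T m u) (𝓝[<] T) (𝓝 L) := by
    have := intervalIntegral.continuousOn_primitive_interval' hII left_mem_uIcc T right_mem_uIcc
    refine this.mono_left (nhdsWithin_le_of_mem ?_)
    rw [uIcc_of_le hT.le]
    exact Icc_mem_nhdsLT hT
  have hmlim : Tendsto m (𝓝[<] T) (𝓝 (m T)) :=
    (hm T ⟨hT.le, le_rfl⟩).mono_left (nhdsWithin_le_of_mem (Icc_mem_nhdsLT hT))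
  have hscaled : Tendsto (fun t => (T - t) * pathDrift T m t) (𝓝[<] T) (𝓝 (m T - L)) := by
    refine (hmlim.sub hlim).congr' ?_
    filter_upwards [Ico_mem_nhdsLT hT] with t ht
    rw [integral_pathDrift hm ht.1 ht.2, pathDrift]
    have : T - t ≠ 0 := (sub_pos.2 ht.2).ne'
    field_simp
  by_contra hne
  have hne' : m T - L ≠ 0 := fun h => hne (by linarith)
  refine not_intervalIntegrable_of_sub_inv_isBigO_punctured
    (f := fun t => if t < T then pathDrift T m t else (t - T)⁻¹) (c := T) ?_ hT.ne right_mem_uIcc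
    (hII.congr_ae ?_)
  · rw [← Iio_union_Ioi, nhdsWithin_union]
    refine Asymptotics.IsBigO.sup ?_ ?_
    · have hO : (fun _ : ℝ => (1 : ℝ)) =O[𝓝[<] T] fun t => (T - t) * pathDrift T m t :=
        (Asymptotics.isBigO_const_const 1 hne' _).trans
          ((Asymptotics.isEquivalent_const_iff_tendsto hne').2 hscaled).symm.isBigO
      refine ((Asymptotics.isBigO_refl (fun t => (t - T)⁻¹) (𝓝[<] T)).mul hO).congr'
        (Eventually.of_forall fun t => mul_one _) ?_ |>.trans
          (Asymptotics.isBigO_refl (fun t => pathDrift T m t) (𝓝[<] T)).neg_left |>.trans_eventuallyEq ?_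
      · filter_upwards [self_mem_nhdsWithin] with t ht
        have : t - T ≠ 0 := (sub_neg.2 ht).ne
        field_simp
        ring
      · filter_upwards [self_mem_nhdsWithin] with t ht
        exact (if_pos ht).symm
    · refine (Asymptotics.isBigO_refl _ _).congr' EventuallyEq.rfl ?_
      filter_upwards [self_mem_nhdsWithin] with t ht
      simp [not_lt.2 (le_of_lt (mem_Ioi.1 ht))]
  · rw [uIoc_of_le hT.le, ← restrict_Ioo_eq_restrict_Ioc]
    filter_upwards [ae_restrict_mem measurableSet_Ioo] with t ht
    simp [ht.2]

theorem ENNReal_add_add_sq_le (a b c : ℝ≥0∞) :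
    (a + b + c) ^ 2 ≤ 3 * (a ^ 2 + b ^ 2 + c ^ 2) := by
  by_cases h : a = ⊤ ∨ b = ⊤ ∨ c = ⊤
  · rcases h with h | h | h <;> simp [h]
  · push Not at h
    lift a to NNReal using h.1
    lift b to NNReal using h.2.1
    lift c to NNReal using h.2.2
    norm_cast
    rw [← NNReal.coe_le_coe]
    push_cast
    nlinarith [sq_nonneg ((a : ℝ) - b), sq_nonneg ((b : ℝ) - c), sq_nonneg ((a : ℝ) - c)]

theorem integral_Ioc_inv_sub_sq {T t : ℝ} (ht : t ∈ Ioo 0 T) :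
    ∫ u in Ioc (0 : ℝ) t, 1 / (T - u) ^ 2 = 1 / (T - t) - 1 / T := by
  rw [← intervalIntegral.integral_of_le ht.1.le]
  rw [intervalIntegral.integral_eq_sub_of_hasDerivAt (f := fun u => 1 / (T - u))]
  · simp
  · intro u hu
    rw [uIcc_of_le ht.1.le] at hu
    have hu' : T - u ≠ 0 := (sub_pos.2 (hu.2.trans_lt ht.2)).ne'
    have := (((hasDerivAt_id u).const_sub T).inv hu')
    simpa [Pi.inv_def] using this
  · refine ContinuousOn.intervalIntegrable_of_Icc ht.1.le ?_
    exact continuousOn_div_sub_sq ht.2 continuousOn_const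

theorem pathDrift_eq {T t : ℝ} {m : ℝ → ℝ} (hm : ContinuousOn m (Icc 0 T)) (x : ℝ)
    (ht : t ∈ Ioo 0 T) :
    pathDrift T m t = x / T - (x - m t) / (T - t)
      + ∫ u in Ioc (0 : ℝ) t, (x - m u) / (T - u) ^ 2 := by
  have hmt := hm.mono (Icc_subset_Icc_right ht.2.le)
  have e : ∀ u, (x - m u) / (T - u) ^ 2 = x * (1 / (T - u) ^ 2) - m u / (T - u) ^ 2 :=
    fun u => by ring
  have i1 : IntegrableOn (fun u => x * (1 / (T - u) ^ 2)) (Ioc 0 t) :=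
    ((continuousOn_div_sub_sq ht.2 continuousOn_const).integrableOn_Icc.mono_set
      Ioc_subset_Icc_self).const_mul x
  have i2 : IntegrableOn (fun u => m u / (T - u) ^ 2) (Ioc 0 t) :=
    (continuousOn_div_sub_sq ht.2 hmt).integrableOn_Icc.mono_set Ioc_subset_Icc_self
  simp only [e]
  rw [integral_sub i1 i2, integral_const_mul, integral_Ioc_inv_sub_sq ht, pathDrift]
  ring

theorem lintegral_pathDrift_sq_le {T : ℝ} {m : ℝ → ℝ} (hm : ContinuousOn m (Icc 0 T)) (x : ℝ) :
    ∫⁻ t in Ioc (0 : ℝ) T, ENNReal.ofReal (pathDrift T m t ^ 2)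
      ≤ 3 * (‖x / T‖ₑ ^ 2 * ENNReal.ofReal T
        + 5 * ∫⁻ t in Ioo 0 T, (ENNReal.ofReal (T - t)⁻¹ * ‖x - m t‖ₑ) ^ 2) := by
  set f : ℝ → ℝ≥0∞ := fun t => ENNReal.ofReal (T - t)⁻¹ * ‖x - m t‖ₑ with hf
  have hfm : AEMeasurable f (volume.restrict (Ioo 0 T)) := by
    have : AEMeasurable m (volume.restrict (Ioo 0 T)) :=
      (hm.mono Ioo_subset_Icc_self).aemeasurable measurableSet_Ioo
    fun_prop
  rw [← restrict_Ioo_eq_restrict_Ioc]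
  have hpt : ∀ t ∈ Ioo 0 T, ENNReal.ofReal (pathDrift T m t ^ 2)
      ≤ 3 * (‖x / T‖ₑ ^ 2 + f t ^ 2
        + (∫⁻ u in Ioc 0 t, ENNReal.ofReal (T - u)⁻¹ * f u) ^ 2) := by
    intro t ht
    have e1 : ‖(x - m t) / (T - t)‖ₑ = f t := by
      rw [hf, div_eq_inv_mul, enorm_mul, Real.enorm_of_nonneg (inv_nonneg.2 (sub_pos.2 ht.2).le)]
    have e2 : ‖∫ u in Ioc (0 : ℝ) t, (x - m u) / (T - u) ^ 2‖ₑ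
        ≤ ∫⁻ u in Ioc 0 t, ENNReal.ofReal (T - u)⁻¹ * f u := by
      refine (enorm_integral_le_lintegral_enorm _).trans_eq ?_
      refine setLIntegral_congr_fun measurableSet_Ioc fun u hu => ?_
      have : 0 ≤ (T - u)⁻¹ := inv_nonneg.2 (sub_pos.2 (hu.2.trans_lt ht.2)).le
      simp only [hf]
      rw [show (x - m u) / (T - u) ^ 2 = (T - u)⁻¹ * ((T - u)⁻¹ * (x - m u)) by
        rw [div_eq_mul_inv, sq, mul_inv]; ring, enorm_mul, enorm_mul, Real.enorm_of_nonneg this]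
    rw [← Real.enorm_of_nonneg (sq_nonneg _), enorm_pow, pathDrift_eq hm x ht]
    refine le_trans (pow_le_pow_left' ((enorm_add_le _ _).trans
      (add_le_add (enorm_sub_le.trans_eq (by rw [e1])) e2)) 2) (ENNReal_add_add_sq_le _ _ _)
  refine (setLIntegral_mono' measurableSet_Ioo hpt).trans ?_
  rw [lintegral_const_mul' _ _ (by simp), lintegral_add_left' (by fun_prop),
    lintegral_add_left' (by fun_prop), lintegral_const]
  refine mul_le_mul_right ?_ 3
  have hh := dual_hardy_inequality hfm
  calc _ ≤ ‖x / T‖ₑ ^ 2 * (volume.restrict (Ioo 0 T)) univ + (∫⁻ t in Ioo 0 T, f t ^ 2)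
        + 2 ^ 2 * ∫⁻ t in Ioo 0 T, f t ^ 2 := by gcongr
    _ = _ := by
      rw [Measure.restrict_apply_univ, Real.volume_Ioo, sub_zero]
      ring

theorem lintegral_hardy_sq_le {Ω : Type*} [MeasurableSpace Ω] {Q : Measure Ω} [SFinite Q] {T : ℝ}
    {D : ℝ → Ω → ℝ} {f : ℝ → Ω → ℝ≥0∞}
    (hD : Measurable fun p : ℝ × Ω => D p.1 p.2) (hf : Measurable fun p : ℝ × Ω => f p.1 p.2)
    {C : ℝ≥0∞} (hC : C ≠ ⊤)
    (h : ∀ t ∈ Ioo 0 T, ∫⁻ ω, ‖D t ω‖ₑ ^ 2 ∂Q ≤ C * ∫⁻ ω, (∫⁻ u in Ioo t T, f u ω) ^ 2 ∂Q) :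
    ∫⁻ ω, (∫⁻ t in Ioo 0 T, (ENNReal.ofReal (T - t)⁻¹ * ‖D t ω‖ₑ) ^ 2) ∂Q
      ≤ C * (2 ^ 2 * ∫⁻ ω, (∫⁻ u in Ioo 0 T, f u ω ^ 2) ∂Q) := by
  have hS : Measurable fun p : ℝ × Ω => ∫⁻ u in Ioo p.1 T, f u p.2 := by
    have hs : MeasurableSet {q : (ℝ × Ω) × ℝ | q.2 ∈ Ioo q.1.1 T} :=
      (measurableSet_lt (by fun_prop) measurable_snd).inter
        (measurableSet_lt measurable_snd measurable_const)
    have := ((hf.comp (by fun_prop : Measurable fun q : (ℝ × Ω) × ℝ =>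
      (q.2, q.1.2))).indicator hs).lintegral_prod_right' (ν := volume)
    convert this using 2 with p
    rw [← lintegral_indicator measurableSet_Ioo]
    refine lintegral_congr fun u => ?_
    by_cases hu : u ∈ Ioo p.1 T <;>
      simp only [indicator, mem_ofPred_eq, hu, if_true, if_false, Function.comp]
  calc ∫⁻ ω, (∫⁻ t in Ioo 0 T, (ENNReal.ofReal (T - t)⁻¹ * ‖D t ω‖ₑ) ^ 2) ∂Q
      = ∫⁻ t in Ioo 0 T, ∫⁻ ω, (ENNReal.ofReal (T - t)⁻¹ * ‖D t ω‖ₑ) ^ 2 ∂Q := by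
        refine lintegral_lintegral_swap (Measurable.aemeasurable ?_)
        have := hD.comp (measurable_swap (α := Ω) (β := ℝ))
        exact (((by fun_prop : Measurable fun p : Ω × ℝ => ENNReal.ofReal (T - p.2)⁻¹)).mul
          this.enorm).pow_const 2
    _ ≤ ∫⁻ t in Ioo 0 T, C * ∫⁻ ω, (ENNReal.ofReal (T - t)⁻¹ * ∫⁻ u in Ioo t T, f u ω) ^ 2 ∂Q := by
        refine setLIntegral_mono' measurableSet_Ioo fun t ht => ?_
        simp only [mul_pow]
        rw [lintegral_const_mul' _ _ (by finiteness), lintegral_const_mul' _ _ (by finiteness),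
          mul_left_comm]
        gcongr
        exact h t ht
    _ = C * ∫⁻ ω, (∫⁻ t in Ioo 0 T, (ENNReal.ofReal (T - t)⁻¹ * ∫⁻ u in Ioo t T, f u ω) ^ 2) ∂Q := by
        rw [lintegral_const_mul' _ _ hC, lintegral_lintegral_swap (Measurable.aemeasurable ?_)]
        exact (((by fun_prop : Measurable fun p : ℝ × Ω => ENNReal.ofReal (T - p.1)⁻¹)).mul
          hS).pow_const 2
    _ ≤ C * ∫⁻ ω, 2 ^ 2 * (∫⁻ u in Ioo 0 T, f u ω ^ 2) ∂Q := by
        gcongr with ω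
        exact hardy_inequality (hf.comp measurable_prodMk_right).aemeasurable
    _ = _ := by rw [lintegral_const_mul' _ _ (by finiteness)]

theorem sq_lintegral_le {α : Type*} [MeasurableSpace α] {ν : Measure α} {f : α → ℝ≥0∞}
    (hf : AEMeasurable f ν) : (∫⁻ x, f x ∂ν) ^ 2 ≤ ν univ * ∫⁻ x, f x ^ 2 ∂ν := by
  have e : ∀ a : ℝ≥0∞, (a ^ (1 / 2 : ℝ)) ^ 2 = a := fun a => by
    rw [← ENNReal.rpow_two, ← ENNReal.rpow_mul]; norm_num
  have := ENNReal.lintegral_mul_le_Lp_mul_Lq ν Real.HolderConjugate.two_two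
    (f := fun _ => 1) (g := f) aemeasurable_const hf
  simp only [Pi.mul_apply, one_mul, one_pow, lintegral_one, ENNReal.rpow_two] at this
  exact (pow_le_pow_left' this 2).trans_eq (by rw [mul_pow, e, e])

theorem eLpNorm_two_sq {α : Type*} [MeasurableSpace α] (ν : Measure α) (f : α → ℝ) :
    eLpNorm f 2 ν ^ 2 = ∫⁻ x, ‖f x‖ₑ ^ 2 ∂ν := by
  rw [eLpNorm_eq_lintegral_rpow_enorm_toReal two_ne_zero ENNReal.ofNat_ne_top]
  simp only [ENNReal.toReal_ofNat, ENNReal.rpow_two]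
  rw [← ENNReal.rpow_two, ← ENNReal.rpow_mul]
  norm_num

theorem lintegral_sub_condExp_sq_le {Ω : Type*} {m mΩ : MeasurableSpace Ω} (hm : m ≤ mΩ)
    {Q : Measure Ω} [IsProbabilityMeasure Q] {ξ Y : Ω → ℝ} (hξ : MemLp ξ 2 Q) (hY : MemLp Y 2 Q)
    (hYm : StronglyMeasurable[m] Y) :
    ∫⁻ ω, ‖ξ ω - (Q[ξ|m]) ω‖ₑ ^ 2 ∂Q ≤ 2 ^ 2 * ∫⁻ ω, ‖ξ ω - Y ω‖ₑ ^ 2 ∂Q := by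
  have e : ξ - Q[ξ|m] =ᵐ[Q] (ξ - Y) - Q[ξ - Y|m] := by
    filter_upwards [condExp_sub (hξ.integrable one_le_two) (hY.integrable one_le_two) m] with ω h
    rw [condExp_of_stronglyMeasurable hm hYm (hY.integrable one_le_two)] at h
    simp only [Pi.sub_apply] at h ⊢
    rw [h]; ring
  have h2 : eLpNorm (ξ - Q[ξ|m]) 2 Q ≤ 2 * eLpNorm (ξ - Y) 2 Q := by
    rw [eLpNorm_congr_ae e, two_mul]
    refine (eLpNorm_sub_le (hξ.sub hY).1 ?_ one_le_two).trans ?_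
    · exact integrable_condExp.1
    · gcongr
      exact eLpNorm_condExp_le_eLpNorm _ one_le_two
  have := pow_le_pow_left' h2 2
  rw [mul_pow, eLpNorm_two_sq, eLpNorm_two_sq] at this
  exact this

theorem exists_equivalent_probability_lintegral_lt_top {Ω : Type*} [MeasurableSpace Ω]
    (μ : Measure Ω) [IsProbabilityMeasure μ] {B : Ω → ℝ≥0∞} (hB : Measurable B)
    (hfin : ∀ᵐ ω ∂μ, B ω < ⊤) :
    ∃ Q : Measure Ω, IsProbabilityMeasure Q ∧ Q ≪ μ ∧ μ ≪ Q ∧ ∫⁻ ω, B ω ∂Q < ⊤ := by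
  have hρ : Measurable fun ω => (1 + B ω)⁻¹ := (hB.const_add 1).inv
  set ν := μ.withDensity fun ω => (1 + B ω)⁻¹ with hν
  have hμν : μ ≪ ν := withDensity_absolutelyContinuous' hρ.aemeasurable
    (hfin.mono fun ω h => ENNReal.inv_ne_zero.2 (by finiteness))
  have hle : ν univ ≤ 1 := by
    rw [hν, withDensity_apply _ MeasurableSet.univ, Measure.restrict_univ]
    refine (lintegral_mono (g := fun _ => 1) fun ω => ?_).trans_eq (by simp)
    exact ENNReal.inv_le_one.2 le_self_add
  have h0 : ν univ ≠ 0 := fun h => by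
    have := hμν h
    simp at this
  have ht : ν univ ≠ ⊤ := (hle.trans_lt ENNReal.one_lt_top).ne
  have hc0 : (ν univ)⁻¹ ≠ 0 := ENNReal.inv_ne_zero.2 ht
  refine ⟨(ν univ)⁻¹ • ν, ⟨?_⟩, ?_, ?_, ?_⟩
  · simp [ENNReal.inv_mul_cancel h0 ht]
  · exact Measure.smul_absolutelyContinuous.trans (withDensity_absolutelyContinuous _ _)
  · exact hμν.trans (Measure.absolutelyContinuous_smul hc0)
  · rw [lintegral_smul_measure, hν, lintegral_withDensity_eq_lintegral_mul _ hρ hB]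
    refine ENNReal.mul_lt_top (ENNReal.inv_lt_top.2 (pos_iff_ne_zero.2 h0)) ?_
    refine lt_of_le_of_lt (lintegral_mono (g := fun _ => 1) fun ω => ?_) (by simp)
    simp only [Pi.mul_apply]
    rw [mul_comm, ← div_eq_mul_inv]
    exact ENNReal.div_le_of_le_mul (by rw [one_mul]; exact le_add_self)

theorem IsContModOfCondexpMart.memB20_bridgeDrift {Ω : Type*} {mΩ : MeasurableSpace Ω}
    {μ Q : Measure Ω} {ℱ : Filtration ℝ mΩ} {T : ℝ} (hT : 0 < T) {ξ : Ω → ℝ}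
    (hξ : StronglyMeasurable[ℱ T] ξ) [IsProbabilityMeasure Q] (hμQ : μ ≪ Q) (hint : Integrable ξ Q)
    {M : ℝ → Ω → ℝ} (hM : IsContModOfCondexpMart Q ℱ T ξ M)
    (hfin : ∫⁻ ω, (∫⁻ t in Ioc (0 : ℝ) T, ENNReal.ofReal (bridgeDrift T M t ω ^ 2)) ∂Q < ⊤) :
    MemB20 μ ℱ T ξ (bridgeDrift T (gridLimsup M)) := by
  obtain ⟨hadapt, hcont, hmod⟩ := hM
  have hMT : M T =ᵐ[Q] ξ := by
    have := hmod T ⟨hT.le, le_rfl⟩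
    rwa [condExp_of_stronglyMeasurable (ℱ.le T) hξ hint] at this
  have hmeas : Measurable fun p : ℝ × Ω => bridgeDrift T (gridLimsup M) (min p.1 T) p.2 :=
    measurable_bridgeDrift_min T (measurable_gridLimsup_min fun t _ =>
      (hadapt t).mono (ℱ.le t) le_rfl)
  have hdrift : ∀ ω, ContinuousOn (fun t => M t ω) (Icc 0 T) → ∀ t ∈ Ioc 0 T,
      bridgeDrift T (gridLimsup M) t ω = bridgeDrift T M t ω := fun ω hω t ht =>
    bridgeDrift_congr (fun u hu => gridLimsup_eq hω hu) ⟨ht.1.le, ht.2⟩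
  have hae : ∀ᵐ ω ∂Q, ∫⁻ t in Ioc (0 : ℝ) T, ENNReal.ofReal (bridgeDrift T M t ω ^ 2) < ⊤ := by
    have e : (fun ω => ∫⁻ t in Ioc (0 : ℝ) T, ENNReal.ofReal (bridgeDrift T M t ω ^ 2)) =ᵐ[Q]
        fun ω => ∫⁻ t in Ioc (0 : ℝ) T,
          ENNReal.ofReal (bridgeDrift T (gridLimsup M) (min t T) ω ^ 2) := by
      filter_upwards [hcont] with ω hω
      refine setLIntegral_congr_fun measurableSet_Ioc fun t ht => ?_
      simp only [min_eq_left ht.2, hdrift ω hω t ht]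
    refine ae_lt_top' (AEMeasurable.congr (Measurable.aemeasurable ?_) e.symm) hfin.ne
    exact ((hmeas.pow_const 2).ennreal_ofReal).lintegral_prod_left' (μ := volume.restrict (Ioc 0 T))
  refine ⟨isStronglyProgressive_iff_measurable_min.2 fun i => ?_, ?_, ?_⟩
  · let _ : MeasurableSpace Ω := ℱ i
    exact measurable_bridgeDrift_min T (measurable_gridLimsup_min fun t ht =>
      (hadapt t).mono (ℱ.mono ht) le_rfl)
  · filter_upwards [hμQ.ae_le hcont, hμQ.ae_le hae] with ω hω hlt
    rwa [setLIntegral_congr_fun measurableSet_Ioc fun t ht => by rw [hdrift ω hω t ht]]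
  · filter_upwards [hμQ.ae_le hcont, hμQ.ae_le hae, hμQ.ae_le hMT] with ω hω hlt hξω
    rw [setIntegral_congr_fun measurableSet_Ioc (hdrift ω hω), ← hξω]
    exact integral_pathDrift_eq hT hω hlt

theorem enorm_setIntegral_sub_le {g : ℝ → ℝ} {t T : ℝ} (ht : t ∈ Icc 0 T)
    (hg : IntegrableOn g (Ioc 0 T)) :
    ‖(∫ u in Ioc 0 T, g u) - ∫ u in Ioc 0 t, g u‖ₑ ≤ ∫⁻ u in Ioo t T, ‖g (min u T)‖ₑ := by
  rw [← Ioc_union_Ioc_eq_Ioc ht.1 ht.2] at hg ⊢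
  rw [setIntegral_union (Ioc_disjoint_Ioc_of_le le_rfl) measurableSet_Ioc
    hg.left_of_union hg.right_of_union, add_sub_cancel_left]
  refine (enorm_integral_le_lintegral_enorm _).trans_eq ?_
  rw [restrict_Ioo_eq_restrict_Ioc]
  exact setLIntegral_congr_fun measurableSet_Ioc fun u hu => by simp only [min_eq_left hu.2]

theorem enorm_setIntegral_sq_le {g : ℝ → ℝ} {t T : ℝ} (ht : t ≤ T)
    (hg : Measurable fun u => g (min u T)) :
    ‖∫ u in Ioc 0 t, g u‖ₑ ^ 2 ≤ ENNReal.ofReal T * ∫⁻ u in Ioo 0 T, ‖g (min u T)‖ₑ ^ 2 := by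
  have h1 : ‖∫ u in Ioc 0 t, g u‖ₑ ≤ ∫⁻ u in Ioo 0 T, ‖g (min u T)‖ₑ := by
    refine (enorm_integral_le_lintegral_enorm _).trans ?_
    rw [restrict_Ioo_eq_restrict_Ioc,
      setLIntegral_congr_fun measurableSet_Ioc (g := fun u => ‖g (min u T)‖ₑ) fun u hu => by
        simp only [min_eq_left (hu.2.trans ht)]]
    exact lintegral_mono_set (Ioc_subset_Ioc_right ht)
  refine (pow_le_pow_left' h1 2).trans ((sq_lintegral_le hg.enorm.aemeasurable).trans_eq ?_)
  simp

theorem integrableOn_Ioc_of_lintegral_sq_lt_top {g : ℝ → ℝ} {T : ℝ}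
    (hg : Measurable fun u => g (min u T))
    (h : ∫⁻ u in Ioo 0 T, ‖g (min u T)‖ₑ ^ 2 < ⊤) : IntegrableOn g (Ioc 0 T) := by
  have h2 : MemLp (fun u => g (min u T)) 2 (volume.restrict (Ioc 0 T)) := by
    refine ⟨hg.aestronglyMeasurable, ?_⟩
    rw [restrict_Ioo_eq_restrict_Ioc, ← eLpNorm_two_sq] at h
    exact (ENNReal.pow_lt_top_iff.1 h).resolve_right two_ne_zero
  refine (integrableOn_congr_fun (fun u hu => ?_) measurableSet_Ioc).1 (h2.integrable one_le_two)
  simp only [min_eq_left hu.2]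

theorem MemB20.exists_probability {Ω : Type*} {mΩ : MeasurableSpace Ω} {μ : Measure Ω}
    [IsProbabilityMeasure μ] {ℱ : Filtration ℝ mΩ} {T : ℝ} {ξ : Ω → ℝ}
    (hξ : StronglyMeasurable[ℱ T] ξ) {β : ℝ → Ω → ℝ} (hβ : MemB20 μ ℱ T ξ β) :
    ∃ Q : Measure Ω, IsProbabilityMeasure Q ∧ Q ≪ μ ∧ μ ≪ Q ∧ MemLp ξ 2 Q ∧
      ∀ M : ℝ → Ω → ℝ, IsContModOfCondexpMart Q ℱ T ξ M →
        ∫⁻ ω, (∫⁻ t in Ioc (0 : ℝ) T, ENNReal.ofReal (bridgeDrift T M t ω ^ 2)) ∂Q < ⊤ := by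
  obtain ⟨hprog, hsq, hξβ⟩ := hβ
  have hprog' := isStronglyProgressive_iff_measurable_min.1 hprog
  have hb : Measurable fun p : ℝ × Ω => β (min p.1 T) p.2 :=
    (hprog' T).mono (sup_le_sup le_rfl (MeasurableSpace.comap_mono (ℱ.le T))) le_rfl
  have hbω : ∀ ω, Measurable fun u => β (min u T) ω := fun ω => hb.comp measurable_prodMk_right
  have hB : Measurable fun ω => ∫⁻ u in Ioo 0 T, ‖β (min u T) ω‖ₑ ^ 2 :=
    (hb.enorm.pow_const 2).lintegral_prod_left' (μ := volume.restrict (Ioo 0 T))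
  have hBfin : ∀ᵐ ω ∂μ, ∫⁻ u in Ioo 0 T, ‖β (min u T) ω‖ₑ ^ 2 < ⊤ := by
    filter_upwards [hsq] with ω hω
    rw [restrict_Ioo_eq_restrict_Ioc]
    convert hω using 1
    refine setLIntegral_congr_fun measurableSet_Ioc fun u hu => ?_
    simp only [min_eq_left hu.2]
    rw [← enorm_pow, Real.enorm_of_nonneg (sq_nonneg _)]
  obtain ⟨Q, hQ, hQμ, hμQ, hQB⟩ := exists_equivalent_probability_lintegral_lt_top μ hB hBfin
  have hY : ∀ t ≤ T, StronglyMeasurable[ℱ t] fun ω => ∫ u in Ioc 0 t, β u ω := fun t _ => by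
    have : Measurable[ℱ t] fun ω => ∫ u in Ioc 0 t, β u ω := by
      let _ : MeasurableSpace Ω := ℱ t
      have := (measurable_setIntegral_Ioc_min (hprog' t)).comp
        (measurable_prodMk_left (x := t))
      simpa only [Function.comp_def, min_self] using this
    exact this.stronglyMeasurable
  have hYL : ∀ t ≤ T, MemLp (fun ω => ∫ u in Ioc 0 t, β u ω) 2 Q := fun t ht => by
    refine ⟨((hY t ht).mono (ℱ.le t)).aestronglyMeasurable, ?_⟩
    refine (ENNReal.pow_lt_top_iff.1 ?_).resolve_right two_ne_zero
    rw [eLpNorm_two_sq]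
    refine (lintegral_mono fun ω => enorm_setIntegral_sq_le ht (hbω ω)).trans_lt ?_
    rw [lintegral_const_mul' _ _ (by finiteness)]
    exact ENNReal.mul_lt_top (by finiteness) hQB
  have hξL : MemLp ξ 2 Q := (memLp_congr_ae (hQμ.ae_le hξβ)).1 (hYL T le_rfl)
  refine ⟨Q, hQ, hQμ, hμQ, hξL, fun M ⟨hadapt, hcont, hmod⟩ => ?_⟩
  set N := gridLimsup M
  have hNM : ∀ᵐ ω ∂Q, ∀ t ∈ Icc 0 T, N t ω = M t ω := by
    filter_upwards [hcont] with ω hω t ht using gridLimsup_eq hω ht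
  have hNm : Measurable fun p : ℝ × Ω => N (min p.1 T) p.2 :=
    measurable_gridLimsup_min fun t _ => (hadapt t).mono (ℱ.le t) le_rfl
  have hD : Measurable fun p : ℝ × Ω => ξ p.2 - N (min p.1 T) p.2 :=
    ((hξ.mono (ℱ.le T)).measurable.comp measurable_snd).sub hNm
  have hardy := lintegral_hardy_sq_le (Q := Q) (T := T) (D := fun t ω => ξ ω - N (min t T) ω)
    (f := fun u ω => ‖β (min u T) ω‖ₑ) hD hb.enorm (C := 2 ^ 2) (by finiteness) fun t ht => by
      have ht' : t ∈ Icc 0 T := Ioo_subset_Icc_self ht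
      have e : ∀ᵐ ω ∂Q, ‖ξ ω - N (min t T) ω‖ₑ ^ 2 = ‖ξ ω - (Q[ξ|ℱ t]) ω‖ₑ ^ 2 := by
        filter_upwards [hNM, hmod t ht'] with ω h1 h2
        rw [min_eq_left ht'.2, h1 t ht', h2]
      rw [lintegral_congr_ae e]
      refine (lintegral_sub_condExp_sq_le (ℱ.le t) hξL (hYL t ht'.2) (hY t ht'.2)).trans ?_
      gcongr 2 ^ 2 * ?_
      refine lintegral_mono_ae ?_
      filter_upwards [hQμ.ae_le hξβ, hQμ.ae_le hBfin] with ω h1 h2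
      rw [← h1]
      exact pow_le_pow_left' (enorm_setIntegral_sub_le ht'
        (integrableOn_Ioc_of_lintegral_sq_lt_top (g := fun u => β u ω) (hbω ω) h2)) 2
  have hle : ∀ᵐ ω ∂Q, ∫⁻ t in Ioc (0 : ℝ) T, ENNReal.ofReal (bridgeDrift T M t ω ^ 2) ≤
      3 * (‖ξ ω / T‖ₑ ^ 2 * ENNReal.ofReal T + 5 * ∫⁻ t in Ioo 0 T,
        (ENNReal.ofReal (T - t)⁻¹ * ‖ξ ω - N (min t T) ω‖ₑ) ^ 2) := by
    filter_upwards [hcont, hNM] with ω h1 h2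
    refine (lintegral_pathDrift_sq_le h1 (ξ ω)).trans_eq ?_
    congr 3
    refine setLIntegral_congr_fun measurableSet_Ioo fun t ht => ?_
    simp only [min_eq_left ht.2.le, h2 t (Ioo_subset_Icc_self ht)]
  refine (lintegral_mono_ae hle).trans_lt ?_
  have hξT : Measurable fun ω => ‖ξ ω / T‖ₑ ^ 2 * ENNReal.ofReal T :=
    (((hξ.mono (ℱ.le T)).measurable.div_const T).enorm.pow_const 2).mul_const _
  rw [lintegral_const_mul' _ _ (by finiteness), lintegral_add_left hξT,
    lintegral_mul_const' _ _ (by finiteness), lintegral_const_mul' _ _ (by finiteness)]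
  have hξT2 : ∫⁻ ω, ‖ξ ω / T‖ₑ ^ 2 ∂Q < ⊤ := by
    rw [← eLpNorm_two_sq]
    exact ENNReal.pow_lt_top (by simpa only [div_eq_mul_inv] using (hξL.mul_const T⁻¹).2)
  have hH := hardy.trans_lt (ENNReal.mul_lt_top (by finiteness)
    (ENNReal.mul_lt_top (by finiteness) hQB))
  exact ENNReal.mul_lt_top (by finiteness) (ENNReal.add_lt_top.2
    ⟨ENNReal.mul_lt_top hξT2 (by finiteness), ENNReal.mul_lt_top (by finiteness) hH⟩)

theorem stmt5
    {Ω : Type*} {mΩ : MeasurableSpace Ω} (μ : Measure Ω) [IsProbabilityMeasure μ]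
    (ℱ : Filtration ℝ mΩ) (T : ℝ) (hT : 0 < T)
    (ξ : Ω → ℝ) (hξ_meas : StronglyMeasurable[ℱ T] ξ)
    -- for every equivalent probability `Q` integrating `ξ`, the `Q`-martingale
    -- `t ↦ E_Q[ξ | ℱ t]` admits a modification with a.s. continuous paths:
    (hmod : ∀ Q : Measure Ω, IsProbabilityMeasure Q → Q ≪ μ → μ ≪ Q → Integrable ξ Q →
      ∃ M : ℝ → Ω → ℝ, IsContModOfCondexpMart Q ℱ T ξ M) :
    (∃ β, MemB20 μ ℱ T ξ β) ↔
      ∃ Q : Measure Ω, IsProbabilityMeasure Q ∧ Q ≪ μ ∧ μ ≪ Q ∧ Integrable ξ Q ∧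
        ∃ M : ℝ → Ω → ℝ, IsContModOfCondexpMart Q ℱ T ξ M ∧
          (∫⁻ ω, (∫⁻ t in Ioc (0:ℝ) T,
              ENNReal.ofReal ((M t ω / (T - t)
                - ∫ u in Ioc (0:ℝ) t, M u ω / (T - u)^2)^2)) ∂Q) < ⊤ := by
  constructor
  · rintro ⟨β, hβ⟩
    obtain ⟨Q, hQ, hQμ, hμQ, hξL, h⟩ := hβ.exists_probability hξ_meas
    have hint := hξL.integrable one_le_two
    obtain ⟨M, hM⟩ := hmod Q hQ hQμ hμQ hint
    exact ⟨Q, hQ, hQμ, hμQ, hint, M, hM, h M hM⟩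
  · rintro ⟨Q, _, -, hμQ, hint, M, hM, hfin⟩
    exact ⟨_, hM.memB20_bridgeDrift hT hξ_meas hμQ hint hfin⟩
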